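/- arXiv:2510.13469 — 2 statements merged into one kernel-verified Lean document; each statement's English description precedes it below -/
import Mathlib

section
/- The set I(λ) of all ℤ-linear combinations of the n² matrices Y^i·D(η_s), 0 ≤ i, s ≤ n−1, is a subring of M_n(Z) containing the identity matrix, and it contains every ℤ-linear combination of the matrices U^i·D(η_s), 0 ≤ i, s ≤ n−1 (i.e., I(λ) contains the order I associated with the canonical generation). -/
/-!
Matrices over the maximal order `I(λ)` in a cyclic division algebra of degree `n = 3`
over `ℚ` are sums of squares, provided `σ ≡ 1 (mod 2)`.
-/

set_option synthInstance.maxHeartbeats 1000000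

noncomputable section

/-- `ζ = e^{2πi/p}`, a primitive `p`-th root of unity in `ℂ`. -/
def zetaC (p : ℕ) : ℂ := Complex.exp (2 * Real.pi * Complex.I / p)

/-- The Gaussian period `η_s = ∑_{r=0}^{h-1} ζ^{g^{nr+s}}`. -/
def gaussPeriod (n p h g : ℕ) (s : ℕ) : ℂ :=
  ∑ r ∈ Finset.range h, zetaC p ^ (g ^ (n * r + s))

/-- `Z = ℚ(η)`, the subfield of `ℂ` generated over `ℚ` by the Gaussian period `η = η₀`. -/
def Zf (n p h g : ℕ) : IntermediateField ℚ ℂ :=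
  IntermediateField.adjoin ℚ {gaussPeriod n p h g 0}

/-- `η` as an element of `Z = ℚ(η)`. -/
def etaZ (n p h g : ℕ) : Zf n p h g :=
  ⟨gaussPeriod n p h g 0, IntermediateField.subset_adjoin ℚ _ rfl⟩

/-- `D(z) = diag(z, S(z), …, S^{n-1}(z))` in `M_n(Z)`. -/
def Dm (n p h g : ℕ) (S : Zf n p h g ≃ₐ[ℚ] Zf n p h g) (z : Zf n p h g) :
    Matrix (Fin n) (Fin n) (Zf n p h g) :=
  Matrix.diagonal fun i => (S ^ (i : ℕ)) z

/-- The matrix `U` with `U_{i+1,i} = 1`, `U_{1,n} = σ`, and `0` elsewhere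
(indices written `0`-based). -/
def Um (n p h g : ℕ) (σ : ℕ) : Matrix (Fin n) (Fin n) (Zf n p h g) :=
  Matrix.of fun i j =>
    if (i : ℕ) = (j : ℕ) + 1 then 1
    else if (i : ℕ) = 0 ∧ (j : ℕ) = n - 1 then (σ : Zf n p h g) else 0

/-- `Y = (1/p)·(λ·I − U)·D(α)` with `α = β^{n-1}`. -/
def Ym (n p h g σ : ℕ) (lam : ℤ) (S : Zf n p h g ≃ₐ[ℚ] Zf n p h g) (β : Zf n p h g) :
    Matrix (Fin n) (Fin n) (Zf n p h g) :=
  ((p : Zf n p h g)⁻¹) •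
    (((lam : Zf n p h g) • (1 : Matrix (Fin n) (Fin n) (Zf n p h g)) - Um n p h g σ) *
      Dm n p h g S (β ^ (n - 1)))

/-- The maximal order `I(λ)`: all `ℤ`-linear combinations of the `n²` matrices
`Y^i · D(η_s)`, `0 ≤ i, s ≤ n-1`. -/
def Iorder (n p h g σ : ℕ) (lam : ℤ) (S : Zf n p h g ≃ₐ[ℚ] Zf n p h g) (β : Zf n p h g) :
    Set (Matrix (Fin n) (Fin n) (Zf n p h g)) :=
  { M | ∃ c : Fin n → Fin n → ℤ,
      M = ∑ i : Fin n, ∑ s : Fin n,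
        c i s • (Ym n p h g σ lam S β ^ (i : ℕ) *
          Dm n p h g S ((S ^ (s : ℕ)) (etaZ n p h g))) }

/-!
Put `c = p / β ^ (n - 1)`. The conjugates of `β` are associated to `β` and multiply to `p`, so the
same holds for `c`, and `-U = Y D(c) - λ`. Moving coefficients to the right of `Y`, one finds that
`(-U) ^ k` is the value at `Y` of the polynomial `∏_{i < k} (Sⁱ(c) X - λ)`, coefficients being
written to the right of the powers of `Y`. For `k = n` this polynomial has `S`-invariant, hence
rational integral, coefficients; all but the constant one are divisible by `c`, hence by `p`, and
the leading one is `p`. Since `(-U) ^ n = (-1) ^ n σ` and `λ ^ n ≡ σ` modulo `p`, subtracting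
`(-1) ^ n σ` and dividing by `p` gives a monic equation of degree `n` for `Y`.

The ring `R` spanned by the periods has rank at most `n` and `c ^ n` is associated to `p`, so
counting shows that `R / c` is a quotient of `𝔽_p`. Hence `S` acts trivially on it, `z - S z = c w`
for some `w ∈ R`, and `D(z) Y = Y D(S z) + D(λ w)`. Together with the monic equation this makes the
combinations of `1, Y, …, Y ^ (n - 1)` with coefficients in `D(R)` a ring, which contains
`U = λ - Y D(c)`.
-/

open Finset

@[to_additive]
lemma prod_range_succ_apply_of_eq {M : Type*} [CommMonoid M] {f : ℕ → M} {h : ℕ}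
    (hf : f h = f 0) : ∏ r ∈ range h, f (r + 1) = ∏ r ∈ range h, f r := by
  cases h with
  | zero => rfl
  | succ h => rw [prod_range_succ, hf, prod_range_succ']

@[to_additive]
lemma prod_range_mul_eq_prod_prod {M : Type*} [CommMonoid M] (f : ℕ → M) (n h : ℕ) :
    ∏ k ∈ range (n * h), f k = ∏ i ∈ range n, ∏ r ∈ range h, f (n * r + i) := by
  rw [prod_comm]
  induction h with
  | zero => simp
  | succ h ih => rw [mul_add_one, prod_range_add, prod_range_succ, ih]

section RightEvaluation

open Polynomial

variable {R B : Type*} [CommRing R] [Ring B] (D : R →+* B) (Y : B)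

/-- The right evaluation `∑ aⱼ Xʲ ↦ ∑ Yʲ D(aⱼ)` of a polynomial at an element `Y` that need not
commute with the coefficients. It is additive, but in general not multiplicative. -/
def rightEval : R[X] →+ B where
  toFun f := f.sum fun j a => Y ^ j * D a
  map_zero' := sum_zero_index _
  map_add' f g := sum_add_index f g _ (by simp) (by simp [mul_add])

lemma rightEval_monomial (j : ℕ) (a : R) : rightEval D Y (monomial j a) = Y ^ j * D a :=
  sum_monomial_index (f := fun j a => Y ^ j * D a) a (by simp)

lemma rightEval_C (a : R) : rightEval D Y (C a) = D a := by
  simpa using rightEval_monomial D Y 0 a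

lemma rightEval_eq_sum_range {n : ℕ} {f : R[X]} (hf : f.degree < n) :
    rightEval D Y f = ∑ j ∈ range n, Y ^ j * D (f.coeff j) := by
  refine sum_eq_of_subset (fun j a => Y ^ j * D a) (by simp) fun j hj => mem_range.2 ?_
  contrapose! hj
  exact notMem_support_iff.2 ((degree_lt_iff_coeff_zero f n).1 hf j hj)

variable {D Y}

lemma rightEval_X_pow_mul_mul_C (j : ℕ) (f : R[X]) (a : R) :
    rightEval D Y (X ^ j * f * C a) = Y ^ j * rightEval D Y f * D a := by
  induction f using Polynomial.induction_on' with
  | add f g hf hg => simp only [mul_add, add_mul, map_add, hf, hg]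
  | monomial k b =>
    rw [X_pow_mul_monomial, monomial_mul_C, rightEval_monomial, rightEval_monomial, add_comm k,
      pow_add, map_mul, mul_assoc, mul_assoc, mul_assoc]

lemma rightEval_mul_eq_zero {P : R[X]} (hP : rightEval D Y P = 0) (f : R[X]) :
    rightEval D Y (P * f) = 0 := by
  induction f using Polynomial.induction_on' with
  | add f g hf hg => rw [mul_add, map_add, hf, hg, add_zero]
  | monomial j a =>
    rw [← C_mul_X_pow_eq_monomial, show P * (C a * X ^ j) = X ^ j * P * C a by ring,
      rightEval_X_pow_mul_mul_C, hP, mul_zero, zero_mul]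

lemma exists_degree_lt_rightEval_eq {P : R[X]} (hP : P.Monic) (hP₀ : rightEval D Y P = 0)
    [Nontrivial R] (f : R[X]) :
    ∃ r : R[X], r.degree < P.degree ∧ rightEval D Y r = rightEval D Y f := by
  refine ⟨f %ₘ P, degree_modByMonic_lt f hP, ?_⟩
  conv_rhs => rw [← modByMonic_add_div f P, map_add, rightEval_mul_eq_zero hP₀, add_zero]

lemma mul_pow_mem_range_rightEval
    (hDY : ∀ z, ∃ z₁ z₂, D z * Y = Y * D z₁ + D z₂) (j : ℕ) (z : R) :
    D z * Y ^ j ∈ (rightEval D Y).range := by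
  induction j generalizing z with
  | zero => exact ⟨C z, by rw [rightEval_C, pow_zero, mul_one]⟩
  | succ j ih =>
    obtain ⟨z₁, z₂, hz⟩ := hDY z
    obtain ⟨f, hf⟩ := ih z₁
    rw [pow_succ', ← mul_assoc, hz, add_mul, mul_assoc, ← hf]
    exact add_mem ⟨X ^ 1 * f * C 1, by rw [rightEval_X_pow_mul_mul_C, pow_one, map_one, mul_one]⟩
      (ih z₂)

lemma mul_mem_range_rightEval
    (hDY : ∀ z, ∃ z₁ z₂, D z * Y = Y * D z₁ + D z₂) {x y : B}
    (hx : x ∈ (rightEval D Y).range) (hy : y ∈ (rightEval D Y).range) :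
    x * y ∈ (rightEval D Y).range := by
  obtain ⟨f, rfl⟩ := hx
  obtain ⟨g, rfl⟩ := hy
  induction f using Polynomial.induction_on' with
  | add f₁ f₂ h₁ h₂ => rw [map_add, add_mul]; exact add_mem h₁ h₂
  | monomial j a =>
    induction g using Polynomial.induction_on' with
    | add g₁ g₂ h₁ h₂ => rw [map_add, mul_add]; exact add_mem h₁ h₂
    | monomial k b =>
      obtain ⟨f, hf⟩ := mul_pow_mem_range_rightEval hDY k a
      refine ⟨X ^ j * f * C b, ?_⟩
      rw [rightEval_X_pow_mul_mul_C, hf, rightEval_monomial, rightEval_monomial]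
      simp only [mul_assoc]

/-- The ring of all `∑ Yʲ D(aⱼ)`, available as soon as coefficients can be moved across `Y` to
the right. -/
def rightEvalSubring (hDY : ∀ z, ∃ z₁ z₂, D z * Y = Y * D z₁ + D z₂) : Subring B where
  __ := (rightEval D Y).range
  mul_mem' := mul_mem_range_rightEval hDY
  one_mem' := ⟨C 1, by rw [rightEval_C, map_one]⟩

end RightEvaluation

/-- Given an endomorphism `S` with `S ^ n = 1`, the element `b` has norm `∏ᵢ Sⁱ b = p` and
generates an `S`-stable ideal; it plays the role of a generator of the totally ramified prime
above `p`. -/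
structure IsCyclicUniformizer {R : Type*} [CommRing R] (S : R →+* R) (n p : ℕ) (b : R) :
    Prop where
  pow_eq_one : S ^ n = 1
  dvd_map : b ∣ S b
  prod_pow_apply : ∏ i ∈ range n, (S ^ i) b = p

namespace IsCyclicUniformizer

variable {R : Type*} [CommRing R] {S : R →+* R} {n p : ℕ} {b : R}

lemma dvd_pow_apply (hb : IsCyclicUniformizer S n p b) (i : ℕ) : b ∣ (S ^ i) b := by
  induction i with
  | zero => rfl
  | succ i ih =>
    rw [pow_succ', RingHom.mul_def, RingHom.comp_apply]
    exact hb.dvd_map.trans (map_dvd S ih)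

variable [IsDomain R]

lemma associated_pow_apply (hb : IsCyclicUniformizer S n p b) {i : ℕ} (hi : i ≤ n) :
    Associated b ((S ^ i) b) := by
  refine associated_of_dvd_dvd (hb.dvd_pow_apply i) ?_
  have h := map_dvd (S ^ i) (hb.dvd_pow_apply (n - i))
  rwa [← RingHom.comp_apply, ← RingHom.mul_def, ← pow_add, Nat.add_sub_cancel' hi,
    hb.pow_eq_one, RingHom.one_def, RingHom.id_apply] at h

lemma associated_pow (hb : IsCyclicUniformizer S n p b) : Associated (b ^ n) (p : R) := by
  rw [← hb.prod_pow_apply, ← card_range n, ← prod_const, card_range]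
  exact Associated.prod _ _ _ fun i hi => hb.associated_pow_apply (mem_range.1 hi).le

variable [CharZero R]

lemma ne_zero (hb : IsCyclicUniformizer S n p b) (hp : p ≠ 0) (hn : n ≠ 0) : b ≠ 0 :=
  (pow_ne_zero_iff hn).1 (hb.associated_pow.ne_zero_iff.2 (by exact_mod_cast hp))

lemma exists_mul_pow_pred_eq (hb : IsCyclicUniformizer S n p b) (hp : p ≠ 0) (hn : n ≠ 0) :
    ∃ c, c * b ^ (n - 1) = p ∧ IsCyclicUniformizer S n p c := by
  obtain ⟨c, hc⟩ := (pow_dvd_pow b (n.sub_le 1)).trans hb.associated_pow.dvd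
  rw [mul_comm] at hc
  have hp₀ : (p : R) ≠ 0 := by exact_mod_cast hp
  have hcb : Associated c b := by
    refine Associated.of_mul_right ?_ (Associated.refl (b ^ (n - 1)))
      (pow_ne_zero _ (hb.ne_zero hp hn))
    rw [← hc, mul_pow_sub_one hn]
    exact hb.associated_pow.symm
  refine ⟨c, hc.symm, hb.pow_eq_one, ?_, ?_⟩
  · exact (hcb.dvd.trans hb.dvd_map).trans (map_dvd S hcb.symm.dvd)
  · have h : ∏ i ∈ range n, (S ^ i) (c * b ^ (n - 1)) = p ^ n := by simp [← hc]
    simp only [map_mul, map_pow, prod_mul_distrib, prod_pow, hb.prod_pow_apply] at h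
    rw [← mul_pow_sub_one hn] at h
    exact mul_right_cancel₀ (pow_ne_zero _ hp₀) h

lemma natCast_dvd_of_map_eq_self (hb : IsCyclicUniformizer S n p b) (hp : p.Prime)
    (hfix : ∀ x, S x = x → ∃ m : ℤ, (m : R) = x) {x : R} (hx : S x = x) (hbx : b ∣ x) :
    (p : R) ∣ x := by
  obtain ⟨m, rfl⟩ := hfix x hx
  have hp₀ : (p : R) ≠ 0 := by exact_mod_cast hp.ne_zero
  obtain ⟨y, hy⟩ : (p : R) ∣ (m : R) ^ n := by
    rw [← hb.prod_pow_apply]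
    simpa using prod_dvd_prod_of_dvd _ _ fun i (_ : i ∈ range n) => map_dvd (S ^ i) hbx
  have hSy : S y = y := by
    have h := congrArg S hy
    rw [map_pow, map_intCast, hy, map_mul, map_natCast] at h
    exact (mul_left_cancel₀ hp₀ h).symm
  obtain ⟨k, rfl⟩ := hfix y hSy
  have hpm : (p : ℤ) ∣ m ^ n := ⟨k, by exact_mod_cast hy⟩
  simpa using map_dvd (Int.castRingHom R) ((Nat.prime_iff_prime_int.1 hp).dvd_of_dvd_pow hpm)

end IsCyclicUniformizer

lemma index_span_singleton_pow {R : Type*} [CommRing R] [IsDomain R] {b : R} (hb : b ≠ 0)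
    (k : ℕ) :
    (Ideal.span {b ^ k}).toAddSubgroup.index = (Ideal.span {b}).toAddSubgroup.index ^ k := by
  have hmap (x : R) : (Ideal.span {b * x}).toAddSubgroup =
      (Ideal.span {x}).toAddSubgroup.map (AddMonoidHom.mulLeft b) := by
    ext y
    simp [Ideal.mem_span_singleton', mul_left_comm]
  have hrange : (Ideal.span {b}).toAddSubgroup = (AddMonoidHom.mulLeft b).range := by
    ext y
    simp [Ideal.mem_span_singleton', mul_comm]
  induction k with
  | zero => simp [Ideal.span_singleton_one]
  | succ k ih =>
    rw [pow_succ', hmap, AddSubgroup.index_map_of_injective _ (mul_right_injective₀ hb), ih,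
      ← hrange, pow_succ]

lemma exists_intCast_sub_mem_of_index_eq_prime {R : Type*} [CommRing R] {I : Ideal R} {p : ℕ}
    (hp : p.Prime) (hI : I.toAddSubgroup.index = p) (x : R) : ∃ m : ℤ, x - m ∈ I := by
  have : Finite (R ⧸ I) := Nat.finite_of_card_ne_zero (hI.trans_ne hp.ne_zero)
  have := Fintype.ofFinite (R ⧸ I)
  have hcard : Fintype.card (R ⧸ I) = p := Nat.card_eq_fintype_card.symm.trans hI
  obtain ⟨a, ha⟩ := (ZMod.ringEquivOfPrime (R ⧸ I) hp hcard).surjective (Ideal.Quotient.mk I x)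
  obtain ⟨m, rfl⟩ := ZMod.intCast_surjective a
  exact ⟨m, Ideal.Quotient.eq.1 (by simpa using ha.symm)⟩

lemma exists_dvd_sub_intCast_of_associated_pow {R : Type*} [CommRing R] [IsDomain R] [CharZero R]
    [Module.Finite ℤ R] {b : R} {n p : ℕ} (hp : p.Prime) (hR : Module.finrank ℤ R ≤ n)
    (hb : b ≠ 0) (hbp : Associated (b ^ n) (p : R)) (x : R) : ∃ m : ℤ, b ∣ x - m := by
  have hn : 0 < n := Module.finrank_pos.trans_le hR
  have hpR : (Ideal.span {(p : R)}).toAddSubgroup = (nsmulAddMonoidHom (α := R) p).range := by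
    ext y
    simp [Ideal.mem_span_singleton', mul_comm]
  have hindex : (Ideal.span {b}).toAddSubgroup.index ^ n = p ^ Module.finrank ℤ R := by
    rw [← index_span_singleton_pow hb, Ideal.span_singleton_eq_span_singleton.2 hbp, hpR,
      AddSubgroup.index_range_nsmul]
  obtain ⟨j, -, hj⟩ := (Nat.dvd_prime_pow hp).1 ((dvd_pow_self _ hn.ne').trans hindex.dvd)
  have hj₁ : j ≤ 1 := by
    rw [hj, ← pow_mul] at hindex
    have hjn : j * n ≤ 1 * n := by
      rwa [Nat.pow_right_injective hp.two_le hindex, one_mul]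
    exact Nat.le_of_mul_le_mul_right hjn hn
  simp only [← Ideal.mem_span_singleton]
  interval_cases j
  · have htop : Ideal.span {b} = ⊤ := by
      rw [pow_zero, AddSubgroup.index_eq_one] at hj
      exact Submodule.toAddSubgroup_injective hj
    exact ⟨0, by rw [htop]; trivial⟩
  · exact exists_intCast_sub_mem_of_index_eq_prime hp (hj.trans (pow_one p)) x

namespace IsCyclicUniformizer

variable {R : Type*} [CommRing R] [IsDomain R] [CharZero R] {S : R →+* R} {n p : ℕ} {b : R}

lemma dvd_sub_map [Module.Finite ℤ R] (hb : IsCyclicUniformizer S n p b) (hp : p.Prime)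
    (hR : Module.finrank ℤ R ≤ n) (z : R) : b ∣ z - S z := by
  have hn : n ≠ 0 := (Module.finrank_pos.trans_le hR).ne'
  obtain ⟨m, hm⟩ := exists_dvd_sub_intCast_of_associated_pow hp hR (hb.ne_zero hp.ne_zero hn)
    hb.associated_pow z
  have hSm : b ∣ S z - m := by simpa using hb.dvd_map.trans (map_dvd S hm)
  simpa using dvd_sub hm hSm

end IsCyclicUniformizer

section TwistedNorm

open Polynomial

variable {R : Type*} [CommRing R] (S : R →+* R) (c l : R)

/-- The product of the linear polynomials `Sⁱ(c) X - l` for `i < k`. When `S l = l` and `S ^ k = 1`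
it is the norm of `c X - l` with respect to the action of `S` on the coefficients. -/
def twistedNorm (k : ℕ) : R[X] :=
  ∏ i ∈ range k, (C ((S ^ i) c) * X - C l)

variable {S c l}

lemma map_twistedNorm (hl : S l = l) (k : ℕ) :
    (twistedNorm S c l k).map S = ∏ i ∈ range k, (C ((S ^ (i + 1)) c) * X - C l) := by
  simp [twistedNorm, Polynomial.map_prod, hl, pow_succ', RingHom.mul_def]

lemma twistedNorm_succ (hl : S l = l) (k : ℕ) :
    twistedNorm S c l (k + 1) = (C c * X - C l) * (twistedNorm S c l k).map S := by
  rw [map_twistedNorm hl, twistedNorm, prod_range_succ', mul_comm]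
  rfl

lemma map_twistedNorm_eq_self (hl : S l = l) {n : ℕ} (hS : S ^ n = 1) :
    (twistedNorm S c l n).map S = twistedNorm S c l n := by
  rw [map_twistedNorm hl]
  exact prod_range_succ_apply_of_eq (f := fun i => C ((S ^ i) c) * X - C l) (by rw [hS, pow_zero])

lemma natDegree_twistedNorm_le (k : ℕ) : (twistedNorm S c l k).natDegree ≤ k := by
  refine (natDegree_prod_le _ _).trans ((sum_le_card_nsmul _ _ 1 fun i _ => ?_).trans (by simp))
  compute_degree

lemma coeff_zero_twistedNorm (k : ℕ) : (twistedNorm S c l k).coeff 0 = (-l) ^ k := by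
  simp [twistedNorm, coeff_zero_prod]

lemma coeff_self_twistedNorm (k : ℕ) :
    (twistedNorm S c l k).coeff k = ∏ i ∈ range k, (S ^ i) c := by
  have h := coeff_prod_of_natDegree_le (range k) (fun i => C ((S ^ i) c) * X - C l) 1
    fun i _ => by compute_degree
  simpa [twistedNorm, coeff_C] using h

lemma dvd_coeff_twistedNorm (hc : ∀ i, c ∣ (S ^ i) c) (k : ℕ) {j : ℕ} (hj : j ≠ 0) :
    c ∣ (twistedNorm S c l k).coeff j := by
  have hmap : (twistedNorm S c l k).map (Ideal.Quotient.mk (Ideal.span {c})) =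
      C (Ideal.Quotient.mk _ ((-l) ^ k)) := by
    have hzero (i : ℕ) : Ideal.Quotient.mk (Ideal.span {c}) ((S ^ i) c) = 0 :=
      (Ideal.Quotient.eq_zero_iff_dvd _ _).2 (hc i)
    simp [twistedNorm, Polynomial.map_prod, hzero, -RingHom.coe_pow]
  rw [← Ideal.Quotient.eq_zero_iff_dvd, ← coeff_map, hmap, coeff_C_of_ne_zero hj]

lemma IsCyclicUniformizer.exists_monic_C_mul_eq [IsDomain R] [CharZero R] {n p : ℕ}
    (hc : IsCyclicUniformizer S n p c) (hp : p.Prime) (hn : n ≠ 0)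
    (hfix : ∀ x, S x = x → ∃ m : ℤ, (m : R) = x) (hl : S l = l) {a : R}
    (ha : (p : R) ∣ l ^ n - a) :
    ∃ P : R[X], P.Monic ∧ P.natDegree = n ∧
      C (p : R) * P = twistedNorm S c l n - C ((-1) ^ n * a) := by
  have hdvd : C (p : R) ∣ twistedNorm S c l n - C ((-1) ^ n * a) := by
    refine (C_dvd_iff_dvd_coeff _ _).2 fun j => ?_
    rcases eq_or_ne j 0 with rfl | hj
    · rw [coeff_sub, coeff_zero_twistedNorm, coeff_C_zero, neg_pow, ← mul_sub]
      exact ha.mul_left _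
    · rw [coeff_sub, coeff_C_of_ne_zero hj, sub_zero]
      refine hc.natCast_dvd_of_map_eq_self hp hfix ?_ (dvd_coeff_twistedNorm hc.dvd_pow_apply n hj)
      rw [← coeff_map, map_twistedNorm_eq_self hl hc.pow_eq_one]
  obtain ⟨P, hP⟩ := hdvd
  have hp₀ : (p : R) ≠ 0 := by exact_mod_cast hp.ne_zero
  have hdeg : P.natDegree ≤ n := by
    rw [← natDegree_C_mul hp₀, ← hP]
    exact (natDegree_sub_le _ _).trans
      (max_le (natDegree_twistedNorm_le n) ((natDegree_C _).trans_le n.zero_le))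
  have hcoeff : P.coeff n = 1 := by
    have h := congrArg (coeff · n) hP
    simp only [coeff_sub, coeff_self_twistedNorm, hc.prod_pow_apply, coeff_C_of_ne_zero hn,
      sub_zero, coeff_C_mul] at h
    exact mul_left_cancel₀ hp₀ (by rw [← h, mul_one])
  refine ⟨P, monic_of_natDegree_le_of_coeff_eq_one n hdeg hcoeff, ?_, hP.symm⟩
  exact natDegree_eq_of_le_of_coeff_ne_zero hdeg (hcoeff.trans_ne one_ne_zero)

end TwistedNorm

lemma isUnit_map_of_dvd {R B : Type*} [CommMonoid R] [Monoid B] (D : R →* B) {x y : R}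
    (hxy : x ∣ y) (hy : IsUnit (D y)) : IsUnit (D x) := by
  obtain ⟨z, rfl⟩ := hxy
  have hcomm : Commute (D x) (D z) := (Commute.all x z).map D
  rw [map_mul, hcomm.isUnit_mul_iff] at hy
  exact hy.1

section CyclicAlgebra

open Polynomial

variable {R B : Type*} [CommRing R] [Ring B] {S : R →+* R} {D : R →+* B} {U Y : B} {c l : R}

lemma rightEval_mul_neg (hDU : ∀ z, D z * U = U * D (S z)) (hY : Y * D c = D l - U) (f : R[X]) :
    rightEval D Y f * -U = rightEval D Y ((C c * X - C l) * f.map S) := by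
  induction f using Polynomial.induction_on' with
  | add f g hf hg => simp only [Polynomial.map_add, mul_add, add_mul, map_add, hf, hg]
  | monomial j a =>
    have hU : -U = Y * D c - D l := by rw [hY]; abel
    have hmonomial : (C c * X - C l) * (monomial j a).map S =
        monomial (j + 1) (c * S a) - monomial j (l * S a) := by
      rw [map_monomial, sub_mul, mul_assoc, X_mul_monomial, C_mul_monomial, C_mul_monomial]
    rw [hmonomial, map_sub, rightEval_monomial, rightEval_monomial, rightEval_monomial, mul_assoc,
      mul_neg, hDU, ← neg_mul, hU, map_mul, map_mul, pow_succ, sub_mul, mul_sub]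
    simp only [mul_assoc]

lemma rightEval_twistedNorm (hDU : ∀ z, D z * U = U * D (S z)) (hY : Y * D c = D l - U)
    (hl : S l = l) (k : ℕ) : rightEval D Y (twistedNorm S c l k) = (-U) ^ k := by
  induction k with
  | zero => rw [twistedNorm, prod_range_zero, ← C_1, rightEval_C, map_one, pow_zero]
  | succ k ih => rw [twistedNorm_succ hl, ← rightEval_mul_neg hDU hY, ih, pow_succ]

lemma mul_eq_mul_map_add (hDU : ∀ z, D z * U = U * D (S z)) (hY : Y * D c = D l - U)
    (hc : IsUnit (D c)) {z w : R} (hw : z - S z = c * w) :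
    D z * Y = Y * D (S z) + D (l * w) := by
  refine hc.mul_left_injective ?_
  calc D z * Y * D c = D (l * z) - U * D (S z) := by
        rw [mul_assoc, hY, mul_sub, hDU, ← map_mul, mul_comm]
    _ = (D l - U) * D (S z) + D (l * (c * w)) := by
        rw [← hw, mul_sub, map_sub, map_mul D l (S z), sub_mul]; abel
    _ = (Y * D (S z) + D (l * w)) * D c := by
        rw [← hY, add_mul, mul_assoc, mul_assoc, ← map_mul, ← map_mul, ← map_mul, mul_comm c (S z),
          mul_assoc l, mul_comm c]

lemma exists_monic_rightEval_eq_zero [IsDomain R] [CharZero R] {n p : ℕ} {a : R}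
    (hc : IsCyclicUniformizer S n p c) (hp : p.Prime) (hn : n ≠ 0)
    (hfix : ∀ x, S x = x → ∃ m : ℤ, (m : R) = x) (hl : S l = l) (ha : (p : R) ∣ l ^ n - a)
    (hDU : ∀ z, D z * U = U * D (S z)) (hY : Y * D c = D l - U) (hU : U ^ n = D a)
    (hpB : IsUnit (p : B)) :
    ∃ P : R[X], P.Monic ∧ P.natDegree = n ∧ rightEval D Y P = 0 := by
  obtain ⟨P, hmonic, hdeg, hP⟩ := hc.exists_monic_C_mul_eq hp hn hfix hl ha
  refine ⟨P, hmonic, hdeg, hpB.mul_right_injective ?_⟩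
  calc p * rightEval D Y P = rightEval D Y (C (p : R) * P) := by
        rw [map_natCast, ← nsmul_eq_mul, ← nsmul_eq_mul, map_nsmul]
    _ = p * 0 := by
        rw [hP, map_sub, rightEval_twistedNorm hDU hY hl, rightEval_C, map_mul, ← hU, map_pow,
          map_neg, map_one, neg_pow U, sub_self, mul_zero]

theorem exists_subring_eq_rightEval_degree_lt [IsDomain R] [CharZero R] [Module.Finite ℤ R]
    {a : R} {n p : ℕ}
    (hc : IsCyclicUniformizer S n p c) (hp : p.Prime) (hR : Module.finrank ℤ R ≤ n)
    (hfix : ∀ x, S x = x → ∃ m : ℤ, (m : R) = x) (hl : S l = l) (ha : (p : R) ∣ l ^ n - a)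
    (hDU : ∀ z, D z * U = U * D (S z)) (hY : Y * D c = D l - U) (hU : U ^ n = D a)
    (hpB : IsUnit (p : B)) :
    ∃ T : Subring B, (T : Set B) = {x | ∃ f : R[X], f.degree < n ∧ rightEval D Y f = x} ∧
      U ∈ T ∧ ∀ z, D z ∈ T := by
  have hn : n ≠ 0 := (Module.finrank_pos.trans_le hR).ne'
  have hcp : c ∣ (p : R) := (dvd_pow_self c hn).trans hc.associated_pow.dvd
  have hDc : IsUnit (D c) := isUnit_map_of_dvd (D : R →* B) hcp (by simpa using hpB)
  have hDY (z : R) : ∃ z₁ z₂, D z * Y = Y * D z₁ + D z₂ := by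
    obtain ⟨w, hw⟩ := hc.dvd_sub_map hp hR z
    exact ⟨S z, l * w, mul_eq_mul_map_add hDU hY hDc hw⟩
  obtain ⟨P, hP, hdeg, hP₀⟩ :=
    exists_monic_rightEval_eq_zero hc hp hn hfix hl ha hDU hY hU hpB
  refine ⟨rightEvalSubring hDY, ?_, ?_, fun z => ⟨C z, rightEval_C D Y z⟩⟩
  · ext x
    refine ⟨?_, fun ⟨f, _, hf⟩ => ⟨f, hf⟩⟩
    rintro ⟨f, rfl⟩
    obtain ⟨r, hr, hrf⟩ := exists_degree_lt_rightEval_eq hP hP₀ f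
    exact ⟨r, by rwa [degree_eq_natDegree hP.ne_zero, hdeg] at hr, hrf⟩
  · have hU' := rightEval_twistedNorm hDU hY hl 1
    rw [pow_one] at hU'
    exact neg_mem_iff.1 ⟨_, hU'⟩

end CyclicAlgebra

lemma exists_intCast_eq_of_isIntegral {K : Type*} [Field K] [CharZero K] {x : K}
    (hx : IsIntegral ℤ x) {n : ℕ} (hn : n ≠ 0) {m : ℤ} (hm : n * x = m) : ∃ k : ℤ, (k : K) = x := by
  have hn₀ : (n : K) ≠ 0 := by exact_mod_cast hn
  have hq : algebraMap ℚ K (m / n) = x := by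
    rw [map_div₀, map_intCast, map_natCast, ← hm, mul_div_cancel_left₀ x hn₀]
  rw [← hq, isIntegral_algebraMap_iff (algebraMap ℚ K).injective] at hx
  obtain ⟨k, hk⟩ := IsIntegrallyClosed.isIntegral_iff.1 hx
  exact ⟨k, by rw [← hq, ← hk]; simp⟩

@[to_additive]
lemma prod_erase_zero_eq_prod_range {M : Type*} [CommMonoid M] {p : ℕ} [NeZero p]
    {φ : ℕ → ZMod p} (hinj : Set.InjOn φ (range (p - 1))) (hφ : ∀ k ∈ range (p - 1), φ k ≠ 0)
    (f : ZMod p → M) : ∏ a ∈ univ.erase 0, f a = ∏ k ∈ range (p - 1), f (φ k) := by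
  have himage : (range (p - 1)).image φ = univ.erase 0 := by
    refine eq_of_subset_of_card_le (image_subset_iff.2 fun k hk => by simp [hφ k hk]) ?_
    rw [card_image_of_injOn hinj, card_range, card_erase_of_mem (mem_univ 0), card_univ, ZMod.card]
  rw [← himage, prod_image hinj]

@[to_additive]
lemma prod_erase_zero_eq_prod_prod_of_generator {M : Type*} [CommMonoid M] {n p h : ℕ}
    [Fact p.Prime] {a : ZMod p} (hph : p = n * h + 1) (ha : orderOf a = p - 1) (ha₀ : a ≠ 0)
    (f : ZMod p → M) :
    ∏ x ∈ univ.erase 0, f x = ∏ i ∈ range n, ∏ r ∈ range h, f (a ^ (n * r + i)) := by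
  have hinj : Set.InjOn (a ^ ·) (range (p - 1) : Set ℕ) := by
    simpa [← ha, Set.Iio] using pow_injOn_Iio_orderOf (x := a)
  rw [prod_erase_zero_eq_prod_range hinj (fun k _ => pow_ne_zero k ha₀) f,
    show p - 1 = n * h by omega, prod_range_mul_eq_prod_prod]

lemma stdAddChar_natCast {p : ℕ} [NeZero p] (k : ℕ) :
    ZMod.stdAddChar (k : ZMod p) = zetaC p ^ k := by
  rw [zetaC, ← Complex.exp_nat_mul, ← Int.cast_natCast, ZMod.stdAddChar_coe]
  congr 1
  push_cast
  ring

lemma prod_erase_zero_one_sub_stdAddChar {p : ℕ} [Fact p.Prime] :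
    ∏ a ∈ univ.erase (0 : ZMod p), (1 - ZMod.stdAddChar a) = (p : ℂ) := by
  have hp : p - 1 + 1 = p := Nat.sub_add_cancel (Fact.out : p.Prime).one_le
  have hinj : Set.InjOn (fun k : ℕ => ((k + 1 : ℕ) : ZMod p)) (range (p - 1)) := by
    intro i hi j hj hij
    simp only [coe_range, Set.mem_Iio] at hi hj
    have h := (ZMod.natCast_eq_natCast_iff' _ _ _).1 hij
    rw [Nat.mod_eq_of_lt (by omega), Nat.mod_eq_of_lt (by omega)] at h
    omega
  have hne : ∀ k ∈ range (p - 1), ((k + 1 : ℕ) : ZMod p) ≠ 0 := fun k hk h₀ => by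
    have h := Nat.le_of_dvd k.succ_pos ((ZMod.natCast_eq_zero_iff _ _).1 h₀)
    rw [mem_range] at hk
    omega
  have hzeta : IsPrimitiveRoot (zetaC p) (p - 1 + 1) :=
    hp.symm ▸ Complex.isPrimitiveRoot_exp p (NeZero.ne p)
  rw [prod_erase_zero_eq_prod_range hinj hne]
  simp only [stdAddChar_natCast]
  rw [hzeta.prod_one_sub_pow_eq_order]
  exact_mod_cast hp

section GroupRing

open AddMonoidAlgebra

/-- The endomorphism of a group ring of an additive group underlying a ring that multiplies the
exponents by `a`. On the group ring of `ZMod p` it lifts `ζ ↦ ζ ^ a`. -/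
def dilation {G : Type*} [Ring G] (a : G) :
    AddMonoidAlgebra ℤ G →+* AddMonoidAlgebra ℤ G :=
  mapDomainRingHom ℤ (AddMonoidHom.mulLeft a)

/-- The ring homomorphism `ℤ[G] →+* R` given by `∑ mₐ [a] ↦ ∑ mₐ ψ(a)`. -/
def charEval {G R : Type*} [AddMonoid G] [CommRing R] (ψ : AddChar G R) :
    AddMonoidAlgebra ℤ G →+* R :=
  (AddMonoidAlgebra.lift ℤ R G ψ.toMonoidHom : AddMonoidAlgebra ℤ G →ₐ[ℤ] R)

lemma dilation_single {G : Type*} [Ring G] (a b : G) (m : ℤ) :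
    dilation a (single b m) = single (a * b) m := by
  simp [dilation]

lemma dilation_dilation {G : Type*} [Ring G] (a b : G) (F : AddMonoidAlgebra ℤ G) :
    dilation a (dilation b F) = dilation (a * b) F := by
  have h : (dilation a).comp (dilation b) = dilation (a * b) :=
    AddMonoidAlgebra.ringHom_ext (by simp [dilation_single]) fun x => by
      simp [dilation_single, mul_assoc]
  exact RingHom.congr_fun h F

lemma dilation_one {G : Type*} [Ring G] (F : AddMonoidAlgebra ℤ G) : dilation 1 F = F := by
  have h : dilation (1 : G) = RingHom.id _ :=
    AddMonoidAlgebra.ringHom_ext (by simp [dilation_single]) fun x => by simp [dilation_single]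
  exact RingHom.congr_fun h F

lemma coeff_dilation_mul {G : Type*} [Ring G] [IsDomain G] {a : G} (ha : a ≠ 0)
    (F : AddMonoidAlgebra ℤ G) (b : G) : (dilation a F).coeff (a * b) = F.coeff b := by
  rw [dilation, mapDomainRingHom_apply, coeff_mapDomain]
  exact Finsupp.mapDomain_apply (mul_right_injective₀ ha) _ _

lemma charEval_single {G R : Type*} [AddMonoid G] [CommRing R] (ψ : AddChar G R) (a : G) (m : ℤ) :
    charEval ψ (single a m) = m * ψ a := by
  rw [← zsmul_eq_mul]
  exact AddMonoidAlgebra.lift_single ψ.toMonoidHom a m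

lemma charEval_dilation {G R : Type*} [Ring G] [Fintype G] [CommRing R] (ψ : AddChar G R) (a : G)
    (F : AddMonoidAlgebra ℤ G) :
    charEval ψ (dilation a F) = ∑ b, (F.coeff b : R) * ψ (a * b) := by
  conv_lhs => rw [← sum_coeff_single F, Finsupp.sum_fintype _ _ fun b => single_zero b]
  simp only [map_sum, dilation_single, charEval_single]

lemma dilation_sum_dilation_pow {G : Type*} [Ring G] {a : G} {h : ℕ} (ha : a ^ h = 1)
    (F : AddMonoidAlgebra ℤ G) :
    dilation a (∑ r ∈ range h, dilation (a ^ r) F) = ∑ r ∈ range h, dilation (a ^ r) F := by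
  simp only [map_sum, dilation_dilation, ← pow_succ']
  exact sum_range_succ_apply_of_eq (f := fun r => dilation (a ^ r) F) (by rw [ha, pow_zero])

lemma dilation_prod_dilation_pow {G : Type*} [CommRing G] {a : G} {h : ℕ} (ha : a ^ h = 1)
    (F : AddMonoidAlgebra ℤ G) :
    dilation a (∏ r ∈ range h, dilation (a ^ r) F) = ∏ r ∈ range h, dilation (a ^ r) F := by
  simp only [map_prod, dilation_dilation, ← pow_succ']
  exact prod_range_succ_apply_of_eq (f := fun r => dilation (a ^ r) F) (by rw [ha, pow_zero])

lemma dilation_natCast_one_sub_single {G : Type*} [Ring G] (k : ℕ) :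
    dilation (k : G) (1 - single 1 1) =
      (1 - single 1 1) * ∑ j ∈ range k, single (1 : G) (1 : ℤ) ^ j := by
  rw [mul_neg_geom_sum, map_sub, map_one, dilation_single, single_pow, mul_one, nsmul_one, one_pow]

end GroupRing

lemma pow_apply_sum_zsmul_eta {n p h g : ℕ} {S : Zf n p h g ≃ₐ[ℚ] Zf n p h g} (m : ℕ → ℤ) (k : ℕ) :
    (S ^ k) (∑ i ∈ range n, m i • (S ^ i) (etaZ n p h g)) =
      ∑ i ∈ range n, m i • (S ^ (i + k)) (etaZ n p h g) := by
  simp only [map_sum, map_zsmul, ← AlgEquiv.mul_apply, ← pow_add, add_comm k]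

lemma coe_sum_zsmul_eta {n p h g : ℕ} {S : Zf n p h g ≃ₐ[ℚ] Zf n p h g}
    (hS : ∀ s : ℕ, (((S ^ s) (etaZ n p h g) : Zf n p h g) : ℂ) = gaussPeriod n p h g s)
    (m : ℕ → ℤ) (k : ℕ) :
    ((∑ i ∈ range n, m i • (S ^ (i + k)) (etaZ n p h g) : Zf n p h g) : ℂ) =
      ∑ i ∈ range n, (m i : ℂ) * gaussPeriod n p h g (i + k) := by
  rw [← IntermediateField.coe_val, map_sum]
  simp only [zsmul_eq_mul, map_mul, map_intCast]
  simp only [IntermediateField.coe_val, hS]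

lemma pos_of_prime_eq_mul_add_one {n p h : ℕ} (hp : p.Prime) (hph : p = n * h + 1) : 0 < n :=
  Nat.pos_of_ne_zero fun hn => hp.ne_one (by rw [hph, hn, zero_mul, zero_add])

section Period

open AddMonoidAlgebra

variable {n p h g : ℕ} [Fact p.Prime]

lemma natCast_ne_zero_of_orderOf (hg : orderOf (g : ZMod p) = p - 1) : (g : ZMod p) ≠ 0 := by
  have hp : p - 1 ≠ 0 := Nat.sub_ne_zero_of_lt (Fact.out : p.Prime).one_lt
  rintro h₀
  simp [h₀, hp.symm] at hg

lemma natCast_pow_mul_eq_one (hph : p = n * h + 1) (hg : orderOf (g : ZMod p) = p - 1) :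
    (g : ZMod p) ^ (n * h) = 1 := by
  rw [show n * h = orderOf (g : ZMod p) by omega, pow_orderOf_eq_one]

lemma gaussPeriod_eq_sum_stdAddChar (s : ℕ) :
    gaussPeriod n p h g s = ∑ r ∈ range h, ZMod.stdAddChar ((g : ZMod p) ^ (n * r + s)) :=
  sum_congr rfl fun r _ => by rw [← stdAddChar_natCast, Nat.cast_pow]

lemma gaussPeriod_self (hph : p = n * h + 1) (hg : orderOf (g : ZMod p) = p - 1) :
    gaussPeriod n p h g n = gaussPeriod n p h g 0 := by
  rw [gaussPeriod_eq_sum_stdAddChar, gaussPeriod_eq_sum_stdAddChar]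
  exact sum_range_succ_apply_of_eq
    (f := fun r => ZMod.stdAddChar ((g : ZMod p) ^ (n * r)))
    (by rw [natCast_pow_mul_eq_one hph hg, mul_zero, pow_zero])

lemma sum_stdAddChar_mul {a : ZMod p} (ha : a ≠ 0) : ∑ b, ZMod.stdAddChar (a * b) = (0 : ℂ) := by
  simpa [mul_comm, ha] using AddChar.sum_mulShift a (ZMod.isPrimitive_stdAddChar p)

lemma sum_mul_stdAddChar (hph : p = n * h + 1) (hg : orderOf (g : ZMod p) = p - 1)
    {f : ZMod p → ℂ} (hf₀ : f 0 = 0)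
    (hf : ∀ r i, f ((g : ZMod p) ^ (n * r + i)) = f ((g : ZMod p) ^ i)) (k : ℕ) :
    ∑ a, f a * ZMod.stdAddChar ((g : ZMod p) ^ k * a) =
      ∑ i ∈ range n, f ((g : ZMod p) ^ i) * gaussPeriod n p h g (i + k) := by
  rw [← sum_erase univ (a := (0 : ZMod p)) (by rw [hf₀, zero_mul]),
    sum_erase_zero_eq_sum_sum_of_generator hph hg (natCast_ne_zero_of_orderOf hg)]
  refine sum_congr rfl fun i _ => ?_
  rw [gaussPeriod_eq_sum_stdAddChar, mul_sum]
  refine sum_congr rfl fun r _ => ?_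
  rw [hf, ← pow_add, add_comm k, add_assoc]

lemma coeff_pow_of_dilation_eq_self (hg₀ : (g : ZMod p) ≠ 0) {F : AddMonoidAlgebra ℤ (ZMod p)}
    (hF : dilation ((g : ZMod p) ^ n) F = F) (r i : ℕ) :
    F.coeff ((g : ZMod p) ^ (n * r + i)) = F.coeff ((g : ZMod p) ^ i) := by
  induction r with
  | zero => rw [mul_zero, zero_add]
  | succ r ih =>
    have h := coeff_dilation_mul (pow_ne_zero n hg₀) F ((g : ZMod p) ^ (n * r + i))
    rwa [hF, ← pow_add, ← add_assoc, ← mul_one_add, add_comm 1 r, ih] at h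

lemma charEval_dilation_pow (hph : p = n * h + 1) (hg : orderOf (g : ZMod p) = p - 1)
    {F : AddMonoidAlgebra ℤ (ZMod p)} (hF : dilation ((g : ZMod p) ^ n) F = F) (k : ℕ) :
    charEval ZMod.stdAddChar (dilation ((g : ZMod p) ^ k) F) = ∑ i ∈ range n,
      ((F.coeff ((g : ZMod p) ^ i) - F.coeff 0 : ℤ) : ℂ) * gaussPeriod n p h g (i + k) := by
  have hg₀ := natCast_ne_zero_of_orderOf hg
  rw [← sum_mul_stdAddChar hph hg (f := fun a => ((F.coeff a - F.coeff 0 : ℤ) : ℂ)) (by simp)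
    (fun r i => by rw [coeff_pow_of_dilation_eq_self hg₀ hF]), charEval_dilation]
  simp only [Int.cast_sub, sub_mul, sum_sub_distrib, ← mul_sum,
    sum_stdAddChar_mul (pow_ne_zero k hg₀), mul_zero, sub_zero]

lemma sum_gaussPeriod (hph : p = n * h + 1) (hg : orderOf (g : ZMod p) = p - 1) (k : ℕ) :
    ∑ i ∈ range n, gaussPeriod n p h g (i + k) = -1 := by
  have hone (i : ℕ) : (1 : AddMonoidAlgebra ℤ (ZMod p)).coeff ((g : ZMod p) ^ i) = 0 := by
    rw [one_def, coeff_single, Finsupp.single_eq_of_ne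
      (pow_ne_zero i (natCast_ne_zero_of_orderOf hg))]
  have h := charEval_dilation_pow hph hg (map_one (dilation ((g : ZMod p) ^ n))) k
  simp only [map_one, hone, coeff_one_zero, zero_sub, Int.cast_neg, Int.cast_one, neg_mul,
    one_mul, sum_neg_distrib] at h
  rw [h, neg_neg]

lemma natCast_pow_pow_eq_one (hph : p = n * h + 1) (hg : orderOf (g : ZMod p) = p - 1) :
    ((g : ZMod p) ^ n) ^ h = 1 := by
  rw [← pow_mul, natCast_pow_mul_eq_one hph hg]

/-- The element `∏ᵣ (1 - [g ^ (n * r)])` of the group ring `ℤ[ZMod p]`, whose value at `ζ` is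
`β`. -/
def betaLift (n p h g : ℕ) : AddMonoidAlgebra ℤ (ZMod p) :=
  ∏ r ∈ range h, dilation (((g : ZMod p) ^ n) ^ r) (1 - single 1 1)

lemma dilation_betaLift (hph : p = n * h + 1) (hg : orderOf (g : ZMod p) = p - 1) :
    dilation ((g : ZMod p) ^ n) (betaLift n p h g) = betaLift n p h g :=
  dilation_prod_dilation_pow (natCast_pow_pow_eq_one hph hg) _

lemma charEval_dilation_betaLift (k : ℕ) :
    charEval ZMod.stdAddChar (dilation ((g : ZMod p) ^ k) (betaLift n p h g)) =
      ∏ r ∈ range h, (1 - ZMod.stdAddChar ((g : ZMod p) ^ (n * r + k)) : ℂ) := by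
  simp only [betaLift, map_prod, map_sub, map_one, dilation_single, charEval_single, mul_one,
    Int.cast_one, one_mul, ← pow_mul, ← pow_add, add_comm k]

lemma charEval_betaLift :
    charEval ZMod.stdAddChar (betaLift n p h g) =
      ∏ r ∈ range h, (1 - zetaC p ^ (g ^ (n * r))) := by
  have h := charEval_dilation_betaLift (n := n) (p := p) (h := h) (g := g) 0
  rw [pow_zero, dilation_one] at h
  simp only [h, ← stdAddChar_natCast, Nat.cast_pow, add_zero]

lemma exists_dilation_betaLift_eq_mul (hph : p = n * h + 1) (hg : orderOf (g : ZMod p) = p - 1) :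
    ∃ F, dilation ((g : ZMod p) ^ n) F = F ∧
      dilation (g : ZMod p) (betaLift n p h g) = betaLift n p h g * F := by
  refine ⟨_, dilation_prod_dilation_pow (natCast_pow_pow_eq_one hph hg)
    (∑ j ∈ range g, single 1 1 ^ j), ?_⟩
  rw [betaLift, map_prod, ← prod_mul_distrib]
  refine prod_congr rfl fun r _ => ?_
  rw [dilation_dilation, mul_comm, ← dilation_dilation, dilation_natCast_one_sub_single, map_mul]

/-- The ring of all values at `ζ` of elements of the group ring `ℤ[ZMod p]` that are invariant under
multiplication of the exponents by `g ^ n`, as a subring of `Z`. It is the `ℤ`-span of the Gaussian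
periods. -/
def periodRing (n p h g : ℕ) [NeZero p] : Subring (Zf n p h g) :=
  ((RingHom.eqLocus (dilation ((g : ZMod p) ^ n)) (RingHom.id _)).map
    (charEval ZMod.stdAddChar)).comap (algebraMap (Zf n p h g) ℂ)

lemma mem_periodRing {x : Zf n p h g} : x ∈ periodRing n p h g ↔
    ∃ F, dilation ((g : ZMod p) ^ n) F = F ∧ charEval ZMod.stdAddChar F = (x : ℂ) :=
  Iff.rfl

lemma beta_mem_periodRing (hph : p = n * h + 1) (hg : orderOf (g : ZMod p) = p - 1)
    {β : Zf n p h g} (hβ : (β : ℂ) = ∏ r ∈ range h, (1 - zetaC p ^ (g ^ (n * r)))) :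
    β ∈ periodRing n p h g :=
  mem_periodRing.2 ⟨_, dilation_betaLift hph hg, charEval_betaLift.trans hβ.symm⟩

variable {S : Zf n p h g ≃ₐ[ℚ] Zf n p h g} (hph : p = n * h + 1)
  (hg : orderOf (g : ZMod p) = p - 1)
  (hS : ∀ s : ℕ, (((S ^ s) (etaZ n p h g) : Zf n p h g) : ℂ) = gaussPeriod n p h g s)

include hph hg hS

lemma eq_sum_zsmul_eta_of_charEval_eq {F : AddMonoidAlgebra ℤ (ZMod p)}
    (hF : dilation ((g : ZMod p) ^ n) F = F) {x : Zf n p h g}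
    (hx : charEval ZMod.stdAddChar F = (x : ℂ)) :
    x = ∑ i ∈ range n, (F.coeff ((g : ZMod p) ^ i) - F.coeff 0) • (S ^ i) (etaZ n p h g) := by
  refine Subtype.ext ?_
  have h := charEval_dilation_pow hph hg hF 0
  rw [pow_zero, dilation_one, hx] at h
  exact h.trans (coe_sum_zsmul_eta hS _ 0).symm

lemma coe_pow_apply_eq_charEval_dilation {F : AddMonoidAlgebra ℤ (ZMod p)}
    (hF : dilation ((g : ZMod p) ^ n) F = F) {x : Zf n p h g}
    (hx : charEval ZMod.stdAddChar F = (x : ℂ)) (k : ℕ) :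
    (((S ^ k) x : Zf n p h g) : ℂ) =
      charEval ZMod.stdAddChar (dilation ((g : ZMod p) ^ k) F) := by
  rw [eq_sum_zsmul_eta_of_charEval_eq hph hg hS hF hx, pow_apply_sum_zsmul_eta,
    coe_sum_zsmul_eta hS, charEval_dilation_pow hph hg hF]

lemma exists_eq_sum_zsmul_eta {x : Zf n p h g} (hx : x ∈ periodRing n p h g) :
    ∃ m : ℕ → ℤ, x = ∑ i ∈ range n, m i • (S ^ i) (etaZ n p h g) := by
  obtain ⟨F, hF, hx⟩ := mem_periodRing.1 hx
  exact ⟨_, eq_sum_zsmul_eta_of_charEval_eq hph hg hS hF hx⟩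

lemma map_mem_periodRing {x : Zf n p h g} (hx : x ∈ periodRing n p h g) :
    S x ∈ periodRing n p h g := by
  obtain ⟨F, hF, hx⟩ := mem_periodRing.1 hx
  refine mem_periodRing.2 ⟨dilation ((g : ZMod p) ^ 1) F, ?_, ?_⟩
  · rw [dilation_dilation, mul_comm, ← dilation_dilation, hF]
  · rw [← coe_pow_apply_eq_charEval_dilation hph hg hS hF hx, pow_one]

lemma pow_apply_eta_mem_periodRing (s : ℕ) :
    (S ^ s) (etaZ n p h g) ∈ periodRing n p h g := by
  refine mem_periodRing.2 ⟨_, dilation_sum_dilation_pow (natCast_pow_pow_eq_one hph hg)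
    (single ((g : ZMod p) ^ s) 1), ?_⟩
  simp only [map_sum, dilation_single, charEval_single, hS, gaussPeriod_eq_sum_stdAddChar,
    Int.cast_one, one_mul, pow_add, pow_mul]

lemma pow_eq_one_of_gaussPeriod : S ^ n = 1 := by
  have heta : (S ^ n) (etaZ n p h g) = etaZ n p h g :=
    Subtype.ext ((hS n).trans (gaussPeriod_self hph hg))
  have hid : ((S ^ n : Zf n p h g ≃ₐ[ℚ] Zf n p h g) : Zf n p h g →ₐ[ℚ] Zf n p h g) =
      AlgHom.id ℚ _ := by
    refine IntermediateField.algHom_ext_of_eq_adjoin ℚ (S := Zf n p h g) rfl fun x hx => ?_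
    obtain rfl := Set.mem_singleton_iff.1 hx
    exact heta
  exact AlgEquiv.ext fun x => DFunLike.congr_fun hid x

lemma exists_sum_pow_apply_eq_intCast {x : Zf n p h g} (hx : x ∈ periodRing n p h g) :
    ∃ m : ℤ, ∑ k ∈ range n, (S ^ k) x = m := by
  obtain ⟨m, rfl⟩ := exists_eq_sum_zsmul_eta hph hg hS hx
  have hsum (i : ℕ) : ∑ k ∈ range n, (S ^ (i + k)) (etaZ n p h g) = -1 := by
    refine Subtype.ext ?_
    rw [← IntermediateField.coe_val, map_sum]
    simp only [IntermediateField.coe_val, hS, add_comm i, sum_gaussPeriod hph hg]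
    simp
  refine ⟨-∑ i ∈ range n, m i, ?_⟩
  simp only [pow_apply_sum_zsmul_eta]
  rw [sum_comm]
  simp only [← smul_sum, hsum]
  simp

/-- The restriction of `S` to the ring spanned by the Gaussian periods. -/
def periodRingHom : periodRing n p h g →+* periodRing n p h g :=
  (S : Zf n p h g →+* Zf n p h g).restrict _ _ fun _ hx => map_mem_periodRing hph hg hS hx

lemma coe_periodRingHom_pow (k : ℕ) (x : periodRing n p h g) :
    (((periodRingHom hph hg hS ^ k) x : periodRing n p h g) : Zf n p h g) = (S ^ k) x := by
  induction k with
  | zero => rfl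
  | succ k ih =>
    rw [pow_succ', pow_succ', AlgEquiv.mul_apply, ← ih]
    rfl

lemma exists_mem_periodRing_coe_eq_charEval {F : AddMonoidAlgebra ℤ (ZMod p)}
    (hF : dilation ((g : ZMod p) ^ n) F = F) :
    ∃ x ∈ periodRing n p h g, (x : ℂ) = charEval ZMod.stdAddChar F := by
  have hx := charEval_dilation_pow hph hg hF 0
  rw [pow_zero, dilation_one, ← coe_sum_zsmul_eta hS] at hx
  exact ⟨_, mem_periodRing.2 ⟨F, hF, hx⟩, hx.symm⟩

lemma finite_periodRing_and_finrank_le :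
    Module.Finite ℤ (periodRing n p h g) ∧ Module.finrank ℤ (periodRing n p h g) ≤ n := by
  let η (s : Fin n) : periodRing n p h g := ⟨_, pow_apply_eta_mem_periodRing hph hg hS s⟩
  have hη : Function.Surjective (Fintype.linearCombination ℤ η) := by
    intro x
    obtain ⟨m, hm⟩ := exists_eq_sum_zsmul_eta hph hg hS x.2
    refine ⟨fun s => m s, Subtype.ext ?_⟩
    rw [hm, Fintype.linearCombination_apply, ← Subring.coe_subtype, map_sum,
      sum_range fun i => m i • (S ^ i) (etaZ n p h g)]
    rfl
  refine ⟨Module.Finite.of_surjective _ hη, ?_⟩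
  simpa using LinearMap.finrank_le_finrank_of_surjective hη

lemma exists_intCast_eq_of_periodRingHom_eq_self {x : periodRing n p h g}
    (hx : periodRingHom hph hg hS x = x) : ∃ m : ℤ, (m : periodRing n p h g) = x := by
  have hn : n ≠ 0 := (pos_of_prime_eq_mul_add_one Fact.out hph).ne'
  have := (finite_periodRing_and_finrank_le hph hg hS).1
  have hfix (k : ℕ) : (S ^ k) (x : Zf n p h g) = x := by
    rw [AlgEquiv.coe_pow]
    exact Function.iterate_fixed (congrArg Subtype.val hx) k
  obtain ⟨m, hm⟩ := exists_sum_pow_apply_eq_intCast hph hg hS x.2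
  simp only [hfix, sum_const, card_range, nsmul_eq_mul] at hm
  have hint : IsIntegral ℤ (x : Zf n p h g) :=
    (Algebra.IsIntegral.isIntegral (R := ℤ) x).map (periodRing n p h g).subtype.toIntAlgHom
  obtain ⟨k, hk⟩ := exists_intCast_eq_of_isIntegral hint hn hm
  exact ⟨k, Subtype.ext (by simpa using hk)⟩

variable {β : Zf n p h g} (hβ : (β : ℂ) = ∏ r ∈ range h, (1 - zetaC p ^ (g ^ (n * r))))

include hβ

lemma coe_pow_apply_beta (k : ℕ) : (((S ^ k) β : Zf n p h g) : ℂ) =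
    charEval ZMod.stdAddChar (dilation ((g : ZMod p) ^ k) (betaLift n p h g)) :=
  coe_pow_apply_eq_charEval_dilation hph hg hS (dilation_betaLift hph hg)
    (charEval_betaLift.trans hβ.symm) k

lemma prod_pow_apply_beta : ∏ i ∈ range n, (S ^ i) β = p := by
  refine Subtype.ext ?_
  rw [← IntermediateField.coe_val, map_prod]
  simp only [IntermediateField.coe_val, coe_pow_apply_beta hph hg hS hβ,
    charEval_dilation_betaLift]
  rw [← prod_erase_zero_eq_prod_prod_of_generator hph hg (natCast_ne_zero_of_orderOf hg)
    fun a => (1 - ZMod.stdAddChar a : ℂ), prod_erase_zero_one_sub_stdAddChar]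
  simp

lemma exists_mem_periodRing_map_beta_eq_mul : ∃ u ∈ periodRing n p h g, S β = β * u := by
  obtain ⟨F, hF, hmul⟩ := exists_dilation_betaLift_eq_mul hph hg
  obtain ⟨u, hu, huF⟩ := exists_mem_periodRing_coe_eq_charEval hph hg hS hF
  refine ⟨u, hu, Subtype.ext ?_⟩
  have h := coe_pow_apply_beta hph hg hS hβ 1
  rw [pow_one, pow_one, hmul, map_mul, charEval_betaLift, ← hβ, ← huF] at h
  exact h

lemma isCyclicUniformizer_beta : IsCyclicUniformizer (periodRingHom hph hg hS) n p
    ⟨β, beta_mem_periodRing hph hg hβ⟩ where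
  pow_eq_one := by
    refine RingHom.ext fun x => Subtype.ext ?_
    rw [coe_periodRingHom_pow, pow_eq_one_of_gaussPeriod hph hg hS]
    rfl
  dvd_map := by
    obtain ⟨u, hu, hmul⟩ := exists_mem_periodRing_map_beta_eq_mul hph hg hS hβ
    exact ⟨⟨u, hu⟩, Subtype.ext hmul⟩
  prod_pow_apply := by
    refine Subtype.ext ?_
    rw [← Subring.coe_subtype, map_prod]
    simp only [Subring.coe_subtype, coe_periodRingHom_pow, prod_pow_apply_beta hph hg hS hβ]
    simp

end Period

section CyclicMatrices

open scoped Matrix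

variable {n p h g : ℕ} (S : Zf n p h g ≃ₐ[ℚ] Zf n p h g)

/-- The diagonal embedding `Dm` as a ring homomorphism. -/
def DmHom : Zf n p h g →+* Matrix (Fin n) (Fin n) (Zf n p h g) where
  toFun := Dm n p h g S
  map_one' := by simp [Dm]
  map_zero' := by simp [Dm]
  map_mul' x y := by simp [Dm]
  map_add' x y := by simp [Dm]

lemma DmHom_of_map_eq_self {z : Zf n p h g} (hz : S z = z) : DmHom S z = z • 1 := by
  have hfix (k : ℕ) : (S ^ k) z = z := by
    rw [AlgEquiv.coe_pow]
    exact Function.iterate_fixed hz k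
  change Dm n p h g S z = z • 1
  simp only [Dm, hfix, Matrix.smul_one_eq_diagonal]

lemma DmHom_mul_Um (hn : 0 < n) (hSn : S ^ n = 1) (σ : ℕ) (z : Zf n p h g) :
    DmHom S z * Um n p h g σ = Um n p h g σ * DmHom S (S z) := by
  change Dm n p h g S z * _ = _ * Dm n p h g S (S z)
  ext1 i j
  rw [Dm, Dm, Matrix.diagonal_mul, Matrix.mul_diagonal, ← AlgEquiv.mul_apply, ← pow_succ, mul_comm]
  simp only [Um, Matrix.of_apply]
  split_ifs with hsucc hlast
  · rw [hsucc]
  · rw [hlast.1, hlast.2, Nat.sub_add_cancel hn, hSn, pow_zero]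
  · rw [zero_mul, zero_mul]

lemma Um_mulVec_single_of_lt (σ : ℕ) {j : ℕ} (hj : j + 1 < n) :
    Um n p h g σ *ᵥ Pi.single ⟨j, by omega⟩ 1 = Pi.single ⟨j + 1, hj⟩ 1 := by
  ext1 i
  have hlast : ¬((i : ℕ) = 0 ∧ j = n - 1) := by omega
  simp [Um, Pi.single_apply, Fin.ext_iff, hlast]

lemma Um_mulVec_single_last (σ : ℕ) (hn : 0 < n) :
    Um n p h g σ *ᵥ Pi.single ⟨n - 1, by omega⟩ 1 = (σ : Zf n p h g) • Pi.single ⟨0, hn⟩ 1 := by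
  ext1 i
  have hsucc : (i : ℕ) ≠ n - 1 + 1 := by omega
  simp [Um, Pi.single_apply, Fin.ext_iff, hsucc]

lemma Um_pow_mulVec_single_zero (σ : ℕ) {k : ℕ} (hk : k < n) :
    Um n p h g σ ^ k *ᵥ Pi.single ⟨0, by omega⟩ 1 = Pi.single ⟨k, hk⟩ 1 := by
  induction k with
  | zero => rw [pow_zero, Matrix.one_mulVec]
  | succ k ih => rw [pow_succ', ← Matrix.mulVec_mulVec, ih (by omega), Um_mulVec_single_of_lt]

lemma Um_pow_self (hn : 0 < n) (σ : ℕ) : Um n p h g σ ^ n = (σ : Zf n p h g) • 1 := by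
  have hzero : Um n p h g σ ^ n *ᵥ Pi.single ⟨0, hn⟩ 1 =
      (σ : Zf n p h g) • Pi.single ⟨0, hn⟩ 1 := by
    rw [← mul_pow_sub_one hn.ne', ← Matrix.mulVec_mulVec,
      Um_pow_mulVec_single_zero σ (by omega), Um_mulVec_single_last σ hn]
  refine Matrix.ext_of_mulVec_single fun j => ?_
  rw [← Um_pow_mulVec_single_zero σ j.2, Matrix.mulVec_mulVec, ← pow_add, add_comm, pow_add,
    ← Matrix.mulVec_mulVec, hzero, Matrix.mulVec_smul, Matrix.smul_mulVec, Matrix.one_mulVec]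

lemma Ym_mul_DmHom (σ : ℕ) (lam : ℤ) {β c : Zf n p h g} (hp : p ≠ 0)
    (hc : c * β ^ (n - 1) = p) :
    Ym n p h g σ lam S β * DmHom S c = DmHom S lam - Um n p h g σ := by
  have hp₀ : (p : Zf n p h g) ≠ 0 := by exact_mod_cast hp
  have hD : Dm n p h g S (β ^ (n - 1)) * DmHom S c = (p : Zf n p h g) • 1 := by
    change DmHom S _ * _ = _
    rw [← map_mul, mul_comm, hc, DmHom_of_map_eq_self S (map_natCast S p)]
  rw [Ym, Matrix.smul_mul, mul_assoc, hD, Matrix.mul_smul, smul_smul, inv_mul_cancel₀ hp₀,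
    one_smul, mul_one, DmHom_of_map_eq_self S (map_intCast S lam)]

end CyclicMatrices

section Order

open Polynomial

variable {n p h g : ℕ} [Fact p.Prime] {S : Zf n p h g ≃ₐ[ℚ] Zf n p h g} (hph : p = n * h + 1)
  (hg : orderOf (g : ZMod p) = p - 1)
  (hS : ∀ s : ℕ, (((S ^ s) (etaZ n p h g) : Zf n p h g) : ℂ) = gaussPeriod n p h g s)

/-- The diagonal embedding of the ring spanned by the Gaussian periods. -/
def periodDiagonal (S : Zf n p h g ≃ₐ[ℚ] Zf n p h g) :
    periodRing n p h g →+* Matrix (Fin n) (Fin n) (Zf n p h g) :=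
  (DmHom S).comp (periodRing n p h g).subtype

lemma periodDiagonal_apply (x : periodRing n p h g) :
    periodDiagonal S x = Dm n p h g S x :=
  rfl

include hph hg hS

lemma Iorder_eq_rightEval_degree_lt (σ : ℕ) (lam : ℤ) (β : Zf n p h g) :
    Iorder n p h g σ lam S β = {x | ∃ f : (periodRing n p h g)[X],
      f.degree < n ∧ rightEval (periodDiagonal S) (Ym n p h g σ lam S β) f = x} := by
  have hsum (m : Fin n → ℤ) (Y : Matrix (Fin n) (Fin n) (Zf n p h g)) :
      Y * Dm n p h g S (∑ s : Fin n, m s • (S ^ (s : ℕ)) (etaZ n p h g)) =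
        ∑ s : Fin n, m s • (Y * Dm n p h g S ((S ^ (s : ℕ)) (etaZ n p h g))) := by
    change Y * DmHom S _ = ∑ s : Fin n, m s • (Y * DmHom S _)
    simp only [map_sum, map_zsmul, mul_sum, mul_smul_comm]
  ext x
  constructor
  · rintro ⟨m, rfl⟩
    let a (i : Fin n) : periodRing n p h g :=
      ⟨∑ s : Fin n, m i s • (S ^ (s : ℕ)) (etaZ n p h g),
        sum_mem fun s _ => zsmul_mem (pow_apply_eta_mem_periodRing hph hg hS s) (m i s)⟩
    refine ⟨∑ i : Fin n, C (a i) * X ^ (i : ℕ), degree_sum_fin_lt a, ?_⟩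
    rw [map_sum]
    refine sum_congr rfl fun i _ => ?_
    rw [C_mul_X_pow_eq_monomial, rightEval_monomial, periodDiagonal_apply, hsum]
  · rintro ⟨f, hf, rfl⟩
    choose m hm using fun i => exists_eq_sum_zsmul_eta hph hg hS (f.coeff i).2
    refine ⟨fun i s => m i s, ?_⟩
    rw [rightEval_eq_sum_range _ _ hf, sum_range]
    refine sum_congr rfl fun i _ => ?_
    rw [periodDiagonal_apply, hm, sum_range, hsum]

theorem exists_subring_eq_Iorder {σ : ℕ} {lam : ℤ} (hlam : (lam : ZMod p) ^ n = (σ : ZMod p))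
    {β : Zf n p h g} (hβ : (β : ℂ) = ∏ r ∈ range h, (1 - zetaC p ^ (g ^ (n * r)))) :
    ∃ T : Subring (Matrix (Fin n) (Fin n) (Zf n p h g)),
      (T : Set (Matrix (Fin n) (Fin n) (Zf n p h g))) = Iorder n p h g σ lam S β ∧
        Um n p h g σ ∈ T ∧ ∀ s, Dm n p h g S ((S ^ s) (etaZ n p h g)) ∈ T := by
  have hp : p.Prime := Fact.out
  have hn : 0 < n := pos_of_prime_eq_mul_add_one hp hph
  obtain ⟨c, hcβ, hc⟩ :=
    (isCyclicUniformizer_beta hph hg hS hβ).exists_mul_pow_pred_eq hp.ne_zero hn.ne'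
  obtain ⟨_, hrank⟩ := finite_periodRing_and_finrank_le hph hg hS
  have hY : Ym n p h g σ lam S β * periodDiagonal S c =
      periodDiagonal S (lam : periodRing n p h g) - Um n p h g σ := by
    simpa [periodDiagonal] using
      Ym_mul_DmHom S σ lam hp.ne_zero (by simpa using congrArg Subtype.val hcβ)
  have hU : Um n p h g σ ^ n = periodDiagonal S (σ : periodRing n p h g) := by
    rw [Um_pow_self hn, ← DmHom_of_map_eq_self S (map_natCast S σ), map_natCast, map_natCast]
  have hdvd : (p : periodRing n p h g) ∣ (lam : periodRing n p h g) ^ n - σ := by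
    have hint : (p : ℤ) ∣ lam ^ n - σ := by
      rw [← ZMod.intCast_zmod_eq_zero_iff_dvd]
      simp [hlam]
    simpa using map_dvd (Int.castRingHom (periodRing n p h g)) hint
  have hpunit : IsUnit (p : Matrix (Fin n) (Fin n) (Zf n p h g)) := by
    have hunit : IsUnit (p : Zf n p h g) := isUnit_iff_ne_zero.2 (by exact_mod_cast hp.ne_zero)
    simpa using hunit.map (DmHom S)
  obtain ⟨T, hT, hUT, hDT⟩ := exists_subring_eq_rightEval_degree_lt hc hp hrank
    (fun _ => exists_intCast_eq_of_periodRingHom_eq_self hph hg hS)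
    (map_intCast _ lam) hdvd
    (fun z => DmHom_mul_Um S hn (pow_eq_one_of_gaussPeriod hph hg hS) σ z) hY hU hpunit
  exact ⟨T, hT.trans (Iorder_eq_rightEval_degree_lt hph hg hS σ lam β).symm, hUT,
    fun s => hDT ⟨_, pow_apply_eta_mem_periodRing hph hg hS s⟩⟩

end Order

theorem Iorder_is_subring_containing_order_general
    (n p h g σ : ℕ) (lam : ℤ)
    (hp : p.Prime)
    (hph : p = n * h + 1)
    (hg : orderOf (g : ZMod p) = p - 1)
    (hlam : (lam : ZMod p) ^ n = (σ : ZMod p))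
    (S : Zf n p h g ≃ₐ[ℚ] Zf n p h g)
    (hS : ∀ s : ℕ, (((S ^ s) (etaZ n p h g) : Zf n p h g) : ℂ) = gaussPeriod n p h g s)
    (β : Zf n p h g)
    (hβ : (β : ℂ) = ∏ r ∈ Finset.range h, (1 - zetaC p ^ (g ^ (n * r)))) :
    (∃ R : Subring (Matrix (Fin n) (Fin n) (Zf n p h g)),
      (R : Set (Matrix (Fin n) (Fin n) (Zf n p h g))) = Iorder n p h g σ lam S β) ∧
    (1 : Matrix (Fin n) (Fin n) (Zf n p h g)) ∈ Iorder n p h g σ lam S β ∧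
    (∀ c : Fin n → Fin n → ℤ,
      (∑ i : Fin n, ∑ s : Fin n,
        c i s • (Um n p h g σ ^ (i : ℕ) * Dm n p h g S ((S ^ (s : ℕ)) (etaZ n p h g))))
        ∈ Iorder n p h g σ lam S β) := by
  have : Fact p.Prime := ⟨hp⟩
  obtain ⟨T, hT, hUT, hDT⟩ := exists_subring_eq_Iorder hph hg hS hlam hβ
  refine ⟨⟨T, hT⟩, hT ▸ T.one_mem, fun c => hT ▸ ?_⟩
  exact sum_mem fun i _ => sum_mem fun s _ => zsmul_mem (mul_mem (pow_mem hUT i) (hDT s)) _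

/-- The set `I(λ)` of all `ℤ`-linear combinations of the `n²` matrices
`Y^i·D(η_s)` is a subring of `M_n(Z)` containing the identity matrix, and it contains
every `ℤ`-linear combination of the matrices `U^i·D(η_s)` (i.e. `I(λ)` contains the
order `I` associated with the canonical generation). -/
theorem Iorder_is_subring_containing_order
    (n p h g σ : ℕ) (lam : ℤ)
    (hn : n.Prime) (hnodd : Odd n)
    (hp : p.Prime)
    (hph : p = n * h + 1)
    (hg : orderOf (g : ZMod p) = p - 1)
    (hσfac : ∃ qs : Finset ℕ, 2 ≤ qs.card ∧
      (∀ q ∈ qs, q.Prime ∧ ¬ ∃ x : ZMod p, x ^ n = (q : ZMod p)) ∧ σ = ∏ q ∈ qs, q)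
    (hσres : ∃ x : ZMod p, x ^ n = (σ : ZMod p))
    (hσcop : Nat.Coprime σ p)
    (hlam : (lam : ZMod p) ^ n = (σ : ZMod p))
    (S : Zf n p h g ≃ₐ[ℚ] Zf n p h g)
    (hS : ∀ s : ℕ, (((S ^ s) (etaZ n p h g) : Zf n p h g) : ℂ) = gaussPeriod n p h g s)
    (β : Zf n p h g)
    (hβ : (β : ℂ) = ∏ r ∈ Finset.range h, (1 - zetaC p ^ (g ^ (n * r)))) :
    (∃ R : Subring (Matrix (Fin n) (Fin n) (Zf n p h g)),
      (R : Set (Matrix (Fin n) (Fin n) (Zf n p h g))) = Iorder n p h g σ lam S β) ∧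
    (1 : Matrix (Fin n) (Fin n) (Zf n p h g)) ∈ Iorder n p h g σ lam S β ∧
    (∀ c : Fin n → Fin n → ℤ,
      (∑ i : Fin n, ∑ s : Fin n,
        c i s • (Um n p h g σ ^ (i : ℕ) * Dm n p h g S ((S ^ (s : ℕ)) (etaZ n p h g))))
        ∈ Iorder n p h g σ lam S β) := by
  exact Iorder_is_subring_containing_order_general n p h g σ lam hp hph hg hlam S hS β hβ

end
end

section
/- The n Gaussian periods η₀, η₁, …, η_{n−1} (the conjugates of η under the Galois group of Z over ℚ) form a ℤ-basis of the ring of integers O_Z of Z, i.e., they form a normal integral basis of Z. -/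
set_option synthInstance.maxHeartbeats 1000000

noncomputable section

/-!
For a nontrivial additive character `ψ` of `ZMod p` with values in `ℚ(ζ)`, the numbers `ψ u` with
`u` a unit are the conjugates of `ζ = ψ 1`. As they sum to `-1`, they span `ℤ[ζ]`, the ring of
integers of `ℚ(ζ)`; as there are `p - 1` of them, they are a `ℤ`-basis. The automorphism
`ζ ↦ ζ ^ (g ^ n)` permutes this basis and fixes `ℚ(η)`. So the coefficients of an integer of
`ℚ(η)` are constant along the cosets of `⟨g ^ n⟩`, over which the periods are the sums of basis
elements.
-/

section LinearAlgebra

variable {R M ι κ : Type*} [Ring R] [AddCommGroup M] [Module R M]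

theorem linearIndependent_sum_fst [Fintype κ] [Nonempty κ] {v : κ × ι → M}
    (hv : LinearIndependent R v) : LinearIndependent R fun i ↦ ∑ k, v (k, i) := by
  rw [linearIndependent_iff'] at hv ⊢
  intro t c hc i hi
  refine hv (Finset.univ ×ˢ t) (fun x ↦ c x.2) ?_ (Classical.arbitrary κ, i) (by simp [hi])
  simpa only [Finset.sum_product_right, Finset.smul_sum] using hc

theorem coeff_perm_eq_of_map_sum_eq [Fintype ι] {v : ι → M} (hv : LinearIndependent R v)
    {f : M →ₗ[R] M} {σ : Equiv.Perm ι} (hf : ∀ i, f (v i) = v (σ i)) {c : ι → R}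
    (hc : f (∑ i, c i • v i) = ∑ i, c i • v i) (i : ι) : c (σ i) = c i := by
  refine Fintype.linearIndependent_iffₛ.mp (hv.comp σ σ.injective) (c ∘ σ) c ?_ i
  calc ∑ i, c (σ i) • v (σ i) = ∑ i, c i • v i := Equiv.sum_comp σ fun i ↦ c i • v i
    _ = f (∑ i, c i • v i) := hc.symm
    _ = ∑ i, c i • v (σ i) := by simp only [map_sum, map_smul, hf]

end LinearAlgebra

theorem exists_basis_integralClosure {R A B ι : Type*} [CommRing R] [CommRing A] [CommRing B]
    [Algebra R A] [Algebra R B] {f : A →ₐ[R] B} (hf : Function.Injective f) {v : ι → A}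
    {w : ι → B} (hvw : ∀ i, f (v i) = w i) (hint : ∀ i, IsIntegral R (w i))
    (hli : LinearIndependent R w)
    (hspan : ∀ x, IsIntegral R (f x) → f x ∈ Submodule.span R (Set.range w)) :
    ∃ b : Module.Basis ι R (integralClosure R A), ∀ i, (b i : A) = v i := by
  obtain rfl : f ∘ v = w := funext hvw
  let v' (i : ι) : integralClosure R A := ⟨v i, (isIntegral_algHom_iff f hf).mp (hint i)⟩
  let F : integralClosure R A →ₗ[R] B := (f.comp (integralClosure R A).val).toLinearMap
  have hF : Function.Injective F := hf.comp Subtype.val_injective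
  have v'_li : LinearIndependent R v' := LinearIndependent.of_comp F hli
  have v'_span : ⊤ ≤ Submodule.span R (Set.range v') := fun x _ ↦ by
    have hx : F x ∈ Submodule.span R (Set.range (F ∘ v')) :=
      hspan x ((isIntegral_algHom_iff f hf).mpr x.2)
    rw [Set.range_comp, ← Submodule.map_span] at hx
    obtain ⟨y, hy, hyx⟩ := hx
    exact hF hyx ▸ hy
  exact ⟨.mk v'_li v'_span, fun i ↦ by rw [Module.Basis.mk_apply]⟩

theorem bijective_pow_mul_add {G : Type*} [Group G] [Finite G] {u : G} {n h : ℕ}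
    (hu : orderOf u = n * h) (hG : Nat.card G = n * h) :
    Function.Bijective fun x : Fin h × Fin n ↦ u ^ (n * (x.1 : ℕ) + x.2) := by
  rw [Nat.bijective_iff_injective_and_card]
  refine ⟨fun x y hxy ↦ finProdFinEquiv.injective (Fin.ext ?_), by simp [hG, mul_comm]⟩
  have lt_order (z : Fin h × Fin n) : (finProdFinEquiv z : ℕ) < orderOf u :=
    (finProdFinEquiv z).isLt.trans_eq (by rw [hu, mul_comm])
  refine pow_injOn_Iio_orderOf (lt_order x) (lt_order y) ?_
  simpa only [finProdFinEquiv_apply_val, add_comm] using hxy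

theorem addChar_zmod_eq_pow_val {m : ℕ} [NeZero m] {A : Type*} [Monoid A]
    (ψ : AddChar (ZMod m) A) (a : ZMod m) : ψ a = ψ 1 ^ a.val := by
  rw [← AddChar.map_nsmul_eq_pow, nsmul_one, ZMod.natCast_zmod_val]

section AdditiveCharacter

variable {p : ℕ} [Fact p.Prime]

theorem isPrimitiveRoot_addChar_one {A : Type*} [CommMonoid A] {ψ : AddChar (ZMod p) A}
    (hψ : ψ ≠ 1) : IsPrimitiveRoot (ψ 1) p := by
  have pow_p : ψ 1 ^ p = 1 := by
    rw [← AddChar.map_nsmul_eq_pow, nsmul_one, CharP.cast_eq_zero, AddChar.map_zero_eq_one]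
  have ne_one : ψ 1 ≠ 1 := fun h ↦ hψ <| by
    ext a
    rw [addChar_zmod_eq_pow_val, h, one_pow, AddChar.one_apply]
  exact IsPrimitiveRoot.iff_orderOf.mpr (orderOf_eq_prime pow_p ne_one)

section Domain

variable {A : Type*} [CommRing A] [IsDomain A] {ψ : AddChar (ZMod p) A}

theorem sum_units_addChar (hψ : ψ ≠ 1) : ∑ u : (ZMod p)ˣ, ψ u = -1 := by
  have hsum := AddChar.sum_eq_zero_of_ne_one hψ
  rw [Fintype.sum_eq_add_sum_subtype_ne _ 0, AddChar.map_zero_eq_one,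
    ← unitsEquivNeZero.sum_comp] at hsum
  exact eq_neg_of_add_eq_zero_right hsum

theorem span_addChar_units_eq_adjoin (R : Type*) [CommRing R] [Algebra R A] (hψ : ψ ≠ 1) :
    Submodule.span R (Set.range fun u : (ZMod p)ˣ ↦ ψ u) =
      Subalgebra.toSubmodule (Algebra.adjoin R {ψ 1}) := by
  apply le_antisymm
  · rw [Submodule.span_le]
    rintro _ ⟨u, rfl⟩
    simp only [addChar_zmod_eq_pow_val ψ u]
    exact pow_mem (Algebra.self_mem_adjoin_singleton R (ψ 1)) _
  · rw [Algebra.adjoin_eq_span, Submodule.span_le]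
    intro _ hx
    obtain ⟨k, rfl⟩ := Submonoid.mem_closure_singleton.mp hx
    rw [← AddChar.map_nsmul_eq_pow, nsmul_one]
    by_cases hk : (k : ZMod p) = 0
    · rw [hk, AddChar.map_zero_eq_one, ← neg_neg (1 : A), ← sum_units_addChar hψ]
      exact neg_mem (sum_mem fun u _ ↦ Submodule.subset_span ⟨u, rfl⟩)
    · exact Submodule.subset_span ⟨Units.mk0 _ hk, rfl⟩

end Domain

variable {K : Type*} [Field K] [CharZero K] {ψ : AddChar (ZMod p) K}

theorem linearIndependent_addChar_units (hψ : ψ ≠ 1) :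
    LinearIndependent ℤ fun u : (ZMod p)ˣ ↦ ψ u := by
  have hp : p.Prime := Fact.out
  have hζ := isPrimitiveRoot_addChar_one hψ
  rw [linearIndependent_iff_card_eq_finrank_span, Set.finrank, span_addChar_units_eq_adjoin ℤ hψ,
    ZMod.card_units_eq_totient]
  change _ = Module.finrank ℤ (Algebra.adjoin ℤ {ψ 1})
  rw [(Algebra.adjoin.powerBasis' (hζ.isIntegral hp.pos)).finrank, Algebra.adjoin.powerBasis'_dim,
    ← Polynomial.cyclotomic_eq_minpoly hζ hp.pos, Polynomial.natDegree_cyclotomic]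

variable [IsCyclotomicExtension {p} ℚ K]

theorem exists_algEquiv_addChar_eq_mul (ψ : AddChar (ZMod p) K) (u : (ZMod p)ˣ) :
    ∃ τ : K ≃ₐ[ℚ] K, ∀ a, τ (ψ a) = ψ (u * a) := by
  have := IsCyclotomicExtension.numberField {p} ℚ K
  refine ⟨(IsCyclotomicExtension.Rat.galEquivZMod p K).symm u, fun a ↦ ?_⟩
  have pow_p : ψ a ^ p = 1 := by
    rw [← AddChar.map_nsmul_eq_pow, nsmul_eq_mul, CharP.cast_eq_zero, zero_mul,
      AddChar.map_zero_eq_one]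
  rw [IsCyclotomicExtension.Rat.galEquivZMod_apply_of_pow_eq p K _ pow_p,
    MulEquiv.apply_symm_apply, ← AddChar.map_nsmul_eq_pow, nsmul_eq_mul, ZMod.natCast_zmod_val]

theorem mem_adjoin_addChar_one_of_isIntegral (hψ : ψ ≠ 1) {x : K} (hx : IsIntegral ℤ x) :
    x ∈ Algebra.adjoin ℤ {ψ 1} := by
  have := IsCyclotomicExtension.Rat.isIntegralClosure_adjoin_singleton_of_prime
    (isPrimitiveRoot_addChar_one hψ)
  obtain ⟨y, rfl⟩ := (IsIntegralClosure.isIntegral_iff (A := Algebra.adjoin ℤ {ψ 1})).mp hx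
  exact y.2

end AdditiveCharacter

/-- The Gaussian period `∑ r < h, ψ (u ^ (n * r + s))` of an additive character `ψ` of `ZMod p`.
For `ψ a = ζ ^ a` and `u` the class of `g` this is `η_s`; the powers of `u` are taken in
`(ZMod p)ˣ`, so that Galois automorphisms act on the summands by multiplication. -/
def charPeriod {p : ℕ} {A : Type*} [CommRing A] (ψ : AddChar (ZMod p) A) (u : (ZMod p)ˣ)
    (n h s : ℕ) : A :=
  ∑ r ∈ Finset.range h, ψ ↑(u ^ (n * r + s))

section CharPeriod

variable {p n h : ℕ} {u : (ZMod p)ˣ} {A : Type*} [CommRing A] {ψ : AddChar (ZMod p) A}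

theorem map_charPeriod_eq_self (hu : u ^ (n * h) = 1) {τ : A →+* A}
    (hτ : ∀ a, τ (ψ a) = ψ (↑(u ^ n) * a)) (s : ℕ) :
    τ (charPeriod ψ u n h s) = charPeriod ψ u n h s := by
  let t (r : ℕ) : A := ψ ↑(u ^ (n * r + s))
  have t_h : t h = t 0 := by simp only [t, pow_add, hu, mul_zero, pow_zero]
  calc τ (charPeriod ψ u n h s) = ∑ r ∈ Finset.range h, t (r + 1) := by
        simp only [charPeriod, map_sum, hτ, t, ← Units.val_mul, ← pow_add]
        simp only [mul_add, mul_one, add_comm, add_left_comm]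
    _ = ∑ r ∈ Finset.range h, t r := by
        apply add_right_cancel (b := t 0)
        rw [← Finset.sum_range_succ', Finset.sum_range_succ, t_h]

variable [Fact p.Prime]

theorem bijective_units_pow_mul_add (hph : p = n * h + 1) (hu : orderOf u = n * h) :
    Function.Bijective fun x : Fin h × Fin n ↦ u ^ (n * (x.1 : ℕ) + x.2) := by
  refine bijective_pow_mul_add hu ?_
  rw [Nat.card_eq_fintype_card, ZMod.card_units, hph, Nat.add_sub_cancel]

theorem sum_smul_addChar_units_eq_sum_smul_charPeriod (hph : p = n * h + 1)
    (hu : orderOf u = n * h) {c : (ZMod p)ˣ → ℤ} (hc : ∀ w, c (u ^ n * w) = c w) :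
    ∑ w, c w • ψ w = ∑ s : Fin n, c (u ^ (s : ℕ)) • charPeriod ψ u n h s := by
  have periodic : Function.Periodic (fun k ↦ c (u ^ k)) n := fun k ↦ by
    simp only [add_comm k n, pow_add, hc]
  have coeff (r s : ℕ) : c (u ^ (n * r + s)) = c (u ^ s) := by
    simpa only [add_comm, mul_comm, Nat.cast_id] using periodic.nat_mul r s
  rw [← (bijective_units_pow_mul_add hph hu).sum_comp, Fintype.sum_prod_type_right]
  simp only [coeff, charPeriod, Finset.sum_range, Finset.smul_sum]

variable {K : Type*} [Field K] [CharZero K] {ψ : AddChar (ZMod p) K}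

theorem linearIndependent_charPeriod (hψ : ψ ≠ 1) (hph : p = n * h + 1)
    (hu : orderOf u = n * h) :
    LinearIndependent ℤ fun s : Fin n ↦ charPeriod ψ u n h s := by
  have : NeZero h := ⟨by rintro rfl; exact (orderOf_pos u).ne' hu⟩
  simp only [charPeriod, Finset.sum_range]
  exact linearIndependent_sum_fst (v := fun x : Fin h × Fin n ↦ ψ ↑(u ^ (n * (x.1 : ℕ) + x.2))) <|
    (linearIndependent_addChar_units hψ).comp _ (bijective_units_pow_mul_add hph hu).injective

theorem mem_span_charPeriod_of_map_eq_self (hψ : ψ ≠ 1) (hph : p = n * h + 1)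
    (hu : orderOf u = n * h) {τ : K →+* K} (hτ : ∀ a, τ (ψ a) = ψ (↑(u ^ n) * a)) {x : K}
    (hx : x ∈ Algebra.adjoin ℤ {ψ 1}) (hfix : τ x = x) :
    x ∈ Submodule.span ℤ (Set.range fun s : Fin n ↦ charPeriod ψ u n h s) := by
  rw [← Subalgebra.mem_toSubmodule, ← span_addChar_units_eq_adjoin ℤ hψ,
    Submodule.mem_span_range_iff_exists_fun] at hx
  obtain ⟨c, rfl⟩ := hx
  have hc (w : (ZMod p)ˣ) : c (u ^ n * w) = c w :=
    coeff_perm_eq_of_map_sum_eq (linearIndependent_addChar_units hψ)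
      (f := τ.toIntAlgHom.toLinearMap) (σ := Equiv.mulLeft (u ^ n)) (fun w ↦ hτ w) hfix w
  rw [sum_smul_addChar_units_eq_sum_smul_charPeriod hph hu hc]
  exact sum_mem fun s _ ↦ Submodule.smul_mem _ _ (Submodule.subset_span ⟨s, rfl⟩)

theorem mem_span_charPeriod_of_isIntegral [IsCyclotomicExtension {p} ℚ K] (hψ : ψ ≠ 1)
    (hph : p = n * h + 1) (hu : orderOf u = n * h) {x : K}
    (hx : x ∈ IntermediateField.adjoin ℚ {charPeriod ψ u n h 0}) (hint : IsIntegral ℤ x) :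
    x ∈ Submodule.span ℤ (Set.range fun s : Fin n ↦ charPeriod ψ u n h s) := by
  obtain ⟨τ, hτ⟩ := exists_algEquiv_addChar_eq_mul ψ (u ^ n)
  have fix_period : τ (charPeriod ψ u n h 0) = charPeriod ψ u n h 0 :=
    map_charPeriod_eq_self (τ := (τ : K →+* K)) (hu ▸ pow_orderOf_eq_one u) hτ 0
  have fix_x : τ x = x :=
    (IntermediateField.forall_mem_adjoin_smul_eq_self_iff ℚ τ).mpr (by simpa using fix_period) x hx
  exact mem_span_charPeriod_of_map_eq_self hψ hph hu (τ := (τ : K →+* K)) hτ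
    (mem_adjoin_addChar_one_of_isIntegral hψ hint) fix_x

end CharPeriod

section GaussPeriod

variable {n p h g : ℕ}

theorem exists_units_eq_natCast_orderOf_eq (hp : p.Prime) (hph : p = n * h + 1)
    (hg : orderOf (g : ZMod p) = p - 1) :
    ∃ u : (ZMod p)ˣ, (u : ZMod p) = g ∧ orderOf u = n * h := by
  have hfin : IsOfFinOrder (g : ZMod p) :=
    orderOf_pos_iff.mp (hg ▸ Nat.sub_pos_of_lt hp.one_lt)
  refine ⟨hfin.unit, rfl, ?_⟩
  rw [← orderOf_units, IsOfFinOrder.val_unit, hg]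
  omega

theorem isIntegral_gaussPeriod (hp : p ≠ 0) (s : ℕ) : IsIntegral ℤ (gaussPeriod n p h g s) :=
  have hζ : IsPrimitiveRoot (zetaC p) p := Complex.isPrimitiveRoot_exp p hp
  IsIntegral.sum _ fun _ _ ↦ (hζ.isIntegral hp.bot_lt).pow _

theorem exists_cyclotomic_gaussPeriod_eq [Fact p.Prime] {u : (ZMod p)ˣ} (hu : (u : ZMod p) = g) :
    ∃ (L : IntermediateField ℚ ℂ) (ψ : AddChar (ZMod p) L), IsCyclotomicExtension {p} ℚ L ∧
      ψ ≠ 1 ∧ ∀ n h s, ((charPeriod ψ u n h s : L) : ℂ) = gaussPeriod n p h g s := by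
  have hp : p.Prime := Fact.out
  have hζ : IsPrimitiveRoot (zetaC p) p := Complex.isPrimitiveRoot_exp p hp.ne_zero
  let L := IntermediateField.adjoin ℚ {zetaC p}
  let z : L := IntermediateField.AdjoinSimple.gen ℚ (zetaC p)
  have hz : IsPrimitiveRoot z p := IsPrimitiveRoot.coe_submonoidClass_iff.mp hζ
  have cyclotomic : IsCyclotomicExtension {p} ℚ L := by
    change IsCyclotomicExtension {p} ℚ L.toSubalgebra
    rw [IntermediateField.adjoin_simple_toSubalgebra_of_isAlgebraic
      (hζ.isIntegral hp.pos).tower_top.isAlgebraic]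
    exact hζ.adjoin_isCyclotomicExtension ℚ
  have zmodChar_ne_one : AddChar.zmodChar p hz.pow_eq_one ≠ 1 :=
    AddChar.ne_one_iff.mpr ⟨1, by
      simpa only [AddChar.zmodChar_apply, ZMod.val_one, pow_one] using hz.ne_one hp.one_lt⟩
  refine ⟨L, AddChar.zmodChar p hz.pow_eq_one, cyclotomic, zmodChar_ne_one, fun n h s ↦ ?_⟩
  simp only [charPeriod, gaussPeriod, Units.val_pow_eq_pow_val, hu, ← Nat.cast_pow,
    AddChar.zmodChar_apply']
  simp [z, L]

theorem linearIndependent_gaussPeriod (hp : p.Prime) (hph : p = n * h + 1)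
    (hg : orderOf (g : ZMod p) = p - 1) :
    LinearIndependent ℤ fun s : Fin n ↦ gaussPeriod n p h g s := by
  have : Fact p.Prime := ⟨hp⟩
  obtain ⟨u, hug, hu⟩ := exists_units_eq_natCast_orderOf_eq hp hph hg
  obtain ⟨L, ψ, -, hψ, hη⟩ := exists_cyclotomic_gaussPeriod_eq hug
  simp only [← hη]
  exact (linearIndependent_charPeriod hψ hph hu).map_injOn
    (L.val.restrictScalars ℤ).toLinearMap L.val.injective.injOn

theorem mem_span_gaussPeriod_of_isIntegral (hp : p.Prime) (hph : p = n * h + 1)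
    (hg : orderOf (g : ZMod p) = p - 1) {x : ℂ} (hx : x ∈ Zf n p h g) (hint : IsIntegral ℤ x) :
    x ∈ Submodule.span ℤ (Set.range fun s : Fin n ↦ gaussPeriod n p h g s) := by
  have : Fact p.Prime := ⟨hp⟩
  obtain ⟨u, hug, hu⟩ := exists_units_eq_natCast_orderOf_eq hp hph hg
  obtain ⟨L, ψ, _, hψ, hη⟩ := exists_cyclotomic_gaussPeriod_eq hug
  rw [Zf, ← hη, ← IntermediateField.lift_adjoin_simple] at hx
  obtain ⟨y, hy, rfl⟩ := hx
  let φ : L →ₐ[ℤ] ℂ := L.val.restrictScalars ℤ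
  have hy_span := mem_span_charPeriod_of_isIntegral hψ hph hu hy
    ((isIntegral_algHom_iff φ L.val.injective).mp hint)
  have φy_span := Submodule.mem_map_of_mem (f := φ.toLinearMap) hy_span
  rw [Submodule.map_span, ← Set.range_comp] at φy_span
  simp only [← hη]
  exact φy_span

end GaussPeriod

/-- The `n` Gaussian periods `η₀, …, η_{n-1}` (the conjugates of `η`
under the Galois group of `Z` over `ℚ`) form a `ℤ`-basis of the ring of integers `O_Z`
of `Z`, i.e. a normal integral basis. -/
theorem gauss_periods_normal_integral_basis
    (n p h g : ℕ)
    (hn : 2 ≤ n)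
    (hp : p.Prime)
    (hph : p = n * h + 1)
    (hg : orderOf (g : ZMod p) = p - 1)
    (S : Zf n p h g ≃ₐ[ℚ] Zf n p h g)
    (hS : ∀ s : ℕ, (((S ^ s) (etaZ n p h g) : Zf n p h g) : ℂ) = gaussPeriod n p h g s) :
    ∃ b : Module.Basis (Fin n) ℤ (integralClosure ℤ (Zf n p h g)),
      ∀ s : Fin n, (b s : Zf n p h g) = (S ^ (s : ℕ)) (etaZ n p h g) := by
  let φ : Zf n p h g →ₐ[ℤ] ℂ := (Zf n p h g).val.restrictScalars ℤ
  exact exists_basis_integralClosure (f := φ) (Zf n p h g).val.injective (fun s ↦ hS s)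
    (fun s ↦ isIntegral_gaussPeriod hp.ne_zero s) (linearIndependent_gaussPeriod hp hph hg)
    fun x hx ↦ mem_span_gaussPeriod_of_isIntegral hp hph hg x.2 hx

end
end
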